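/- Let G and H be connected graphs and let Π be a resolving partition of G⊙H of minimum cardinality. Let H_i=(V_i,E_i) be the subgraph of G⊙H corresponding to the i-th copy of H, and let Π_i be the collection of all non-empty sets of the form S ∩ V_i with S ∈ Π. Then Π_i is a resolving partition for H_i. -/

import Mathlib

/-!
Fix the copy `V_i` of `H`. A vertex `x` outside `V_i` is at the same distance from all vertices of
`V_i`, since every path leaving `V_i` passes through `v_i`, which is adjacent to all of `V_i`
(`corona_dist_outside_le`). Inside `V_i`, the distance in the corona product is the minimum of `2`
and the distance in `H` (`corona_dist_inside_le`, `le_corona_dist_inside`), a monotone function of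
the latter. Hence two vertices of `H` with equal distances to all nonempty traces `S ∩ V_i` also
have equal distances in the corona product to all cells `S`, and so coincide.
-/

open SimpleGraph

/-- The corona product `G ⊙ H`: one copy of `G`, one copy of `H` for each vertex of `G`,
with the `i`-th vertex of `G` joined to every vertex of the `i`-th copy of `H`. -/
def corona {α β : Type*} (G : SimpleGraph α) (H : SimpleGraph β) :
    SimpleGraph (α ⊕ α × β) :=
  SimpleGraph.fromRel (fun x y =>
    match x, y with
    | Sum.inl a, Sum.inl b => G.Adj a b
    | Sum.inl a, Sum.inr iu => a = iu.1
    | Sum.inr iu, Sum.inr jw => iu.1 = jw.1 ∧ H.Adj iu.2 jw.2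
    | _, _ => False)

/-- The distance from a vertex to a set of vertices: `d(v,A) = min_{u ∈ A} d(v,u)`. -/
noncomputable def setDist {α : Type*} (G : SimpleGraph α) (v : α) (A : Set α) : ℕ :=
  sInf (G.dist v '' A)

/-- `S` is a resolving set for `G`: distinct vertices have distinct metric representations. -/
def IsResolvingSet {α : Type*} (G : SimpleGraph α) (S : Set α) : Prop :=
  ∀ u v : α, (∀ w ∈ S, G.dist u w = G.dist v w) → u = v

/-- The metric dimension of `G`: minimum cardinality of a resolving set. -/
noncomputable def metricDim {α : Type*} (G : SimpleGraph α) : ℕ :=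
  sInf {k | ∃ S : Set α, IsResolvingSet G S ∧ S.ncard = k}

/-- A family of sets is a resolving partition for `G` if it is a partition of the vertex set
into nonempty cells and distinct vertices have distinct partition representations. -/
def IsResolvingPartition {α : Type*} (G : SimpleGraph α) (P : Set (Set α)) : Prop :=
  (∀ A ∈ P, A.Nonempty) ∧ (∀ v : α, ∃! A : Set α, A ∈ P ∧ v ∈ A) ∧
    ∀ u v : α, (∀ A ∈ P, setDist G u A = setDist G v A) → u = v

/-- The partition dimension of `G`: minimum number of cells in a resolving partition. -/
noncomputable def partitionDim {α : Type*} (G : SimpleGraph α) : ℕ :=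
  sInf {t | ∃ P : Set (Set α), IsResolvingPartition G P ∧ P.ncard = t}

/-- `c(H)`: the maximum cardinality of a connected component of `H` which is isomorphic to a
complete graph (i.e. whose vertex set is a clique). -/
noncomputable def maxCompleteComp {β : Type*} (H : SimpleGraph β) : ℕ :=
  sSup {k | ∃ C : H.ConnectedComponent, H.IsClique C.supp ∧ C.supp.ncard = k}

/-- `β(H)`: the number of isolated vertices of `H`. -/
noncomputable def numIsolated {β : Type*} (H : SimpleGraph β) : ℕ :=
  Set.ncard {v : β | ∀ u, ¬ H.Adj v u}

/-- `α(H)`: the number of connected components of `H` of order greater than one. -/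
noncomputable def numBigComp {β : Type*} (H : SimpleGraph β) : ℕ :=
  Set.ncard {C : H.ConnectedComponent | 1 < C.supp.ncard}

section CoronaAdjacency

variable {V W : Type*} {G : SimpleGraph V} {H : SimpleGraph W}

lemma corona_adj_inl_inl {a b : V} (h : G.Adj a b) :
    (corona G H).Adj (Sum.inl a) (Sum.inl b) := by
  simp [corona, h, h.ne]

lemma corona_adj_inr_inl (i : V) (u : W) :
    (corona G H).Adj (Sum.inr (i, u)) (Sum.inl i) := by
  simp [corona]

lemma corona_adj_inr_inl_iff {i j : V} {u : W} :
    (corona G H).Adj (Sum.inr (i, u)) (Sum.inl j) ↔ j = i := by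
  simp [corona]

lemma corona_adj_inr_inr {i j : V} {u w : W} :
    (corona G H).Adj (Sum.inr (i, u)) (Sum.inr (j, w)) ↔ i = j ∧ H.Adj u w := by
  constructor
  · intro h
    simp only [corona, SimpleGraph.fromRel_adj] at h
    rcases h.2 with h | h
    · exact h
    · exact ⟨h.1.symm, h.2.symm⟩
  · rintro ⟨rfl, h⟩
    simp [corona, h, h.ne]

lemma corona_connected (hG : G.Connected) : (corona G H).Connected := by
  have hinl : ∀ a b : V, (corona G H).Reachable (Sum.inl a) (Sum.inl b) := fun a b =>
    (hG.preconnected a b).map ⟨Sum.inl, fun h => corona_adj_inl_inl h⟩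
  have hroot : ∀ x : V ⊕ V × W, ∃ a : V, (corona G H).Reachable x (Sum.inl a) := by
    rintro (a | ⟨i, u⟩)
    · exact ⟨a, SimpleGraph.Reachable.refl _⟩
    · exact ⟨i, (corona_adj_inr_inl i u).reachable⟩
  obtain ⟨a₀⟩ := hG.nonempty
  refine (SimpleGraph.connected_iff _).2 ⟨fun x y => ?_, ⟨Sum.inl a₀⟩⟩
  obtain ⟨a, ha⟩ := hroot x
  obtain ⟨b, hb⟩ := hroot y
  exact ha.trans ((hinl a b).trans hb.symm)

end CoronaAdjacency

section CoronaDistance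

variable {V W : Type*} {G : SimpleGraph V} {H : SimpleGraph W}

/-- A walk from the `i`-th copy of `H` to a vertex outside it can be rerouted, without becoming
longer, to start at any other vertex of that copy: only the part after `v_i` matters. -/
lemma corona_dist_le_walk_length {y x : V ⊕ V × W} (p : (corona G H).Walk y x) (i : V)
    (hx : ∀ w, x ≠ Sum.inr (i, w)) (v : W) (hy : y = Sum.inr (i, v)) (u : W) :
    (corona G H).dist (Sum.inr (i, u)) x ≤ p.length := by
  induction p generalizing v with
  | nil => exact absurd hy (hx v)
  | @cons a b c h q ih =>
    subst hy
    rcases b with j | ⟨j, w⟩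
    · obtain rfl := corona_adj_inr_inl_iff.1 h
      exact SimpleGraph.dist_le (SimpleGraph.Walk.cons (corona_adj_inr_inl j u) q)
    · obtain ⟨rfl, -⟩ := corona_adj_inr_inr.1 h
      have := ih hx w rfl
      rw [SimpleGraph.Walk.length_cons]
      omega

/-- Vertices of one copy of `H` are at the same distance from each vertex outside that copy; by
symmetry in `u` and `v` the inequality suffices. -/
lemma corona_dist_outside_le (hG : G.Connected) (i : V) (u v : W) {x : V ⊕ V × W}
    (hx : ∀ w, x ≠ Sum.inr (i, w)) :
    (corona G H).dist (Sum.inr (i, u)) x ≤ (corona G H).dist (Sum.inr (i, v)) x := by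
  obtain ⟨p, hp⟩ := (corona_connected (H := H) hG).exists_walk_length_eq_dist (Sum.inr (i, v)) x
  rw [← hp]
  exact corona_dist_le_walk_length p i hx v rfl u

lemma corona_dist_inside_le (hH : H.Connected) (i : V) (u w : W) :
    (corona G H).dist (Sum.inr (i, u)) (Sum.inr (i, w)) ≤ min 2 (H.dist u w) := by
  refine le_min ?_ ?_
  · exact SimpleGraph.dist_le (SimpleGraph.Walk.cons (corona_adj_inr_inl i u)
      (SimpleGraph.Walk.cons (corona_adj_inr_inl i w).symm SimpleGraph.Walk.nil))
  · obtain ⟨p, hp⟩ := hH.exists_walk_length_eq_dist u w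
    let f : H →g corona G H :=
      ⟨fun w => Sum.inr (i, w), fun h => corona_adj_inr_inr.2 ⟨rfl, h⟩⟩
    rw [← hp, ← SimpleGraph.Walk.length_map f p]
    exact SimpleGraph.dist_le (p.map f)

lemma le_corona_dist_inside (hG : G.Connected) (i : V) (u w : W) :
    min 2 (H.dist u w) ≤ (corona G H).dist (Sum.inr (i, u)) (Sum.inr (i, w)) := by
  by_contra! hlt
  obtain ⟨h2, hd⟩ := lt_min_iff.1 hlt
  interval_cases hk : (corona G H).dist (Sum.inr (i, u)) (Sum.inr (i, w))
  · have huw := (corona_connected hG).dist_eq_zero_iff.1 hk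
    simp only [Sum.inr.injEq, Prod.mk.injEq, true_and] at huw
    simp [huw] at hd
  · have hadj := (corona_adj_inr_inr.1 (SimpleGraph.dist_eq_one_iff_adj.1 hk)).2
    rw [SimpleGraph.dist_eq_one_iff_adj.2 hadj] at hd
    exact lt_irrefl _ hd

end CoronaDistance

lemma setDist_le {α : Type*} (G : SimpleGraph α) (v : α) {A : Set α} {x : α} (hx : x ∈ A) :
    setDist G v A ≤ G.dist v x :=
  Nat.sInf_le ⟨x, hx, rfl⟩

lemma exists_dist_eq_setDist {α : Type*} (G : SimpleGraph α) (v : α) {A : Set α}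
    (hA : A.Nonempty) : ∃ x ∈ A, G.dist v x = setDist G v A :=
  Nat.sInf_mem (hA.image _)

/-- The representation of a vertex of the `i`-th copy of `H` with respect to cells of the corona
product is controlled by its representation in `H` with respect to their nonempty traces. -/
lemma setDist_corona_le {V W : Type*} {G : SimpleGraph V} {H : SimpleGraph W}
    (hG : G.Connected) (hH : H.Connected) (i : V) (u v : W) {S : Set (V ⊕ V × W)}
    (hS : S.Nonempty)
    (h : ((fun w => (Sum.inr (i, w) : V ⊕ V × W)) ⁻¹' S).Nonempty →
      setDist H u ((fun w => (Sum.inr (i, w) : V ⊕ V × W)) ⁻¹' S) =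
        setDist H v ((fun w => (Sum.inr (i, w) : V ⊕ V × W)) ⁻¹' S)) :
    setDist (corona G H) (Sum.inr (i, u)) S ≤ setDist (corona G H) (Sum.inr (i, v)) S := by
  obtain ⟨x, hxS, hx⟩ := exists_dist_eq_setDist (corona G H) (Sum.inr (i, v)) hS
  rw [← hx]
  by_cases hin : ∃ w, x = Sum.inr (i, w)
  · obtain ⟨w, rfl⟩ := hin
    have hT : ((fun w => (Sum.inr (i, w) : V ⊕ V × W)) ⁻¹' S).Nonempty := ⟨w, hxS⟩
    obtain ⟨w', hw'S, hw'⟩ := exists_dist_eq_setDist H u hT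
    have hle : H.dist u w' ≤ H.dist v w := by
      rw [hw', h hT]
      exact setDist_le H v hxS
    calc setDist (corona G H) (Sum.inr (i, u)) S
        ≤ (corona G H).dist (Sum.inr (i, u)) (Sum.inr (i, w')) := setDist_le _ _ hw'S
      _ ≤ min 2 (H.dist u w') := corona_dist_inside_le hH i u w'
      _ ≤ min 2 (H.dist v w) := min_le_min_left 2 hle
      _ ≤ _ := le_corona_dist_inside hG i v w
  · push Not at hin
    exact (setDist_le _ _ hxS).trans (corona_dist_outside_le hG i u v hin)

/-- If `Part` is a resolving partition of `G⊙H` of minimum cardinality and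
`V_i` is the vertex set of the `i`-th copy of `H`, then the collection of nonempty sets of the
form `S ∩ V_i` with `S ∈ Part` (viewed back in `H` via the canonical embedding `w ↦ inr (i,w)`)
is a resolving partition for the `i`-th copy of `H` (which is isomorphic to `H`). -/
theorem stmt5 {V W : Type*} [Fintype V] [Fintype W] (G : SimpleGraph V) (H : SimpleGraph W)
    (hG : G.Connected) (hH : H.Connected)
    (Part : Set (Set (V ⊕ V × W))) (hPart : IsResolvingPartition (corona G H) Part)
    (hmin : Part.ncard = partitionDim (corona G H)) (i : V) :
    IsResolvingPartition H
      {T : Set W | T.Nonempty ∧ ∃ S ∈ Part, T = (fun w => (Sum.inr (i, w) : V ⊕ V × W)) ⁻¹' S} := by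
  obtain ⟨hne, hcover, hres⟩ := hPart
  refine ⟨fun A hA => hA.1, fun w => ?_, fun u v huv => ?_⟩
  · obtain ⟨S, ⟨hS, hwS⟩, huniq⟩ := hcover (Sum.inr (i, w))
    refine ⟨_, ⟨⟨⟨w, hwS⟩, S, hS, rfl⟩, hwS⟩, ?_⟩
    rintro _ ⟨⟨-, S', hS', rfl⟩, hwS'⟩
    rw [huniq S' ⟨hS', hwS'⟩]
  · have heq := hres (Sum.inr (i, u)) (Sum.inr (i, v)) fun S hS => le_antisymm
      (setDist_corona_le hG hH i u v (hne S hS) fun hT => huv _ ⟨hT, S, hS, rfl⟩)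
      (setDist_corona_le hG hH i v u (hne S hS) fun hT => (huv _ ⟨hT, S, hS, rfl⟩).symm)
    simpa using heq
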